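/- arXiv:1608.08184 — 2 statements merged into one kernel-verified Lean document; each statement's English description precedes it below -/
import Mathlib

section
/- Let p ≥ 2 be an integer and define the polynomials ψ_0 := (L_1 + L_0)/√2, ψ_k := (L_{k+1} − L_{k−1})/√(4k+2) for 1 ≤ k ≤ p−1, and ψ_p := (L_p − L_{p−1})/√(4p+2). Then (I ψ_k)' = √(k + 1/2) · L_k for every k = 0, …, p, and consequently ∫_{−1}^{1} (I ψ_k)'(I ψ_j)' ds = δ_{kj} for all 0 ≤ k, j ≤ p. -/
open Polynomial

/-- The `k`-th Legendre polynomial (Rodrigues' formula), normalized so that `L_k(1) = 1`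
and `∫_{−1}^{1} L_k L_j ds = 2δ_{kj}/(2k+1)`. -/
noncomputable def legendre (k : ℕ) : Polynomial ℝ :=
  ((2 ^ k * (Nat.factorial k) : ℝ))⁻¹ •
    ((fun q => Polynomial.derivative q)^[k] ((Polynomial.X ^ 2 - 1) ^ k))

/-- The reconstruction operator `I : P_p → P_{p+1}`,
`I v := v − v(−1)·(−1)^p (L_p − L_{p+1})/2`. -/
noncomputable def recon (p : ℕ) (v : Polynomial ℝ) : Polynomial ℝ :=
  v - (v.eval (-1) * (-1 : ℝ) ^ p / 2) • (legendre p - legendre (p + 1))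

/-- The basis polynomials `ψ_0 := (L_1 + L_0)/√2`,
`ψ_k := (L_{k+1} − L_{k−1})/√(4k+2)` for `1 ≤ k ≤ p−1`, and
`ψ_p := (L_p − L_{p−1})/√(4p+2)`. -/
noncomputable def psi (p k : ℕ) : Polynomial ℝ :=
  if k = 0 then (Real.sqrt 2)⁻¹ • (legendre 1 + legendre 0)
  else if k = p then (Real.sqrt (4 * (p : ℝ) + 2))⁻¹ • (legendre p - legendre (p - 1))
  else (Real.sqrt (4 * (k : ℝ) + 2))⁻¹ • (legendre (k + 1) - legendre (k - 1))

/-- The unnormalized Legendre polynomial. -/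
noncomputable def lgR (k : ℕ) : Polynomial ℝ := derivative^[k] ((X ^ 2 - 1) ^ k)

lemma legendre_eq (k : ℕ) : legendre k = ((2 ^ k * (Nat.factorial k) : ℝ))⁻¹ • lgR k := rfl

lemma lgR_eq (k : ℕ) : lgR k = (2 ^ k * (Nat.factorial k) : ℝ) • legendre k := by
  rw [legendre_eq, smul_smul, mul_inv_cancel₀, one_smul]
  positivity

lemma deriv_u (n : ℕ) : derivative ((X ^ 2 - 1 : ℝ[X]) ^ (n + 1))
    = (2 * ((n : ℝ) + 1)) • (X * (X ^ 2 - 1) ^ n) := by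
  rw [derivative_pow_succ]
  simp only [derivative_sub, derivative_X_pow, derivative_one, smul_eq_C_mul, map_mul, map_add,
    map_one, map_natCast, map_ofNat]
  push_cast
  simp
  ring

lemma deriv2_u (n : ℕ) : derivative (derivative ((X ^ 2 - 1 : ℝ[X]) ^ (n + 2)))
    = (2 * ((n : ℝ) + 2) * (2 * n + 3)) • (X ^ 2 - 1) ^ (n + 1)
      + (4 * ((n : ℝ) + 2) * (n + 1)) • (X ^ 2 - 1) ^ n := by
  rw [deriv_u, derivative_smul, derivative_mul, deriv_u]
  simp only [derivative_X, smul_eq_C_mul, map_mul, map_add,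
    map_one, map_natCast, map_ofNat]
  push_cast
  ring

lemma lgR_deriv (n : ℕ) : derivative (lgR (n + 2))
    = (2 * ((n : ℝ) + 2) * (2 * n + 3)) • lgR (n + 1)
      + (4 * ((n : ℝ) + 2) * (n + 1)) • derivative (lgR n) := by
  have h : derivative (lgR (n + 2))
      = derivative^[n + 1] (derivative (derivative ((X ^ 2 - 1 : ℝ[X]) ^ (n + 2)))) := by
    rw [lgR, ← Function.iterate_succ_apply' derivative, ← Function.iterate_succ_apply derivative,
      ← Function.iterate_succ_apply derivative]
  rw [h, deriv2_u, iterate_map_add, iterate_derivative_smul, iterate_derivative_smul, lgR,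
    lgR, ← Function.iterate_succ_apply' derivative]

lemma legendre_deriv (n : ℕ) : derivative (legendre (n + 2)) - derivative (legendre n)
    = (2 * (n : ℝ) + 3) • legendre (n + 1) := by
  have h := lgR_deriv n
  simp only [lgR_eq, derivative_smul, smul_smul] at h
  have hc : (2 ^ (n + 2) * (Nat.factorial (n + 2)) : ℝ) ≠ 0 := by positivity
  apply smul_right_injective _ hc
  simp only [smul_sub, smul_smul]
  rw [h]
  have e1 : (2 ^ (n + 2) * (Nat.factorial (n + 2)) : ℝ)
      = 4 * ((n : ℝ) + 2) * (n + 1) * (2 ^ n * (Nat.factorial n)) := by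
    rw [Nat.factorial_succ, Nat.factorial_succ]; push_cast; ring
  have e2 : 2 * ((n : ℝ) + 2) * (2 * n + 3) * (2 ^ (n + 1) * (Nat.factorial (n + 1)))
      = (2 ^ (n + 2) * (Nat.factorial (n + 2)) : ℝ) * (2 * n + 3) := by
    rw [Nat.factorial_succ (n + 1)]; push_cast; ring
  rw [e2, ← e1]
  abel

lemma eval_iter_u (n j : ℕ) (h : j < n) (x : ℝ) (hx : x ^ 2 = 1) :
    (derivative^[j] ((X ^ 2 - 1 : ℝ[X]) ^ n)).eval x = 0 := by
  have hd := pow_sub_dvd_iterate_derivative_of_pow_dvd j (dvd_refl ((X ^ 2 - 1 : ℝ[X]) ^ n))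
  obtain ⟨r, hr⟩ := hd
  rw [hr]
  simp [hx, Nat.sub_ne_zero_of_lt h]

lemma legendre_zero : legendre 0 = 1 := by simp [legendre]

lemma legendre_eval (n : ℕ) (x : ℝ) (hx : x ^ 2 = 1) : (legendre n).eval x = x ^ n := by
  induction n with
  | zero => simp [legendre_zero]
  | succ n ih =>
    have h : (lgR (n + 1)).eval x = (2 * ((n : ℝ) + 1)) * (x * (lgR n).eval x) := by
      rw [lgR, Function.iterate_succ_apply, deriv_u, iterate_derivative_smul,
        mul_comm X, iterate_derivative_mul_X]
      rcases n with _ | n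
      · simp [lgR]
      · simp [eval_iter_u (n + 1) n (by omega) x hx, lgR]
        left; ring
    rw [lgR_eq, lgR_eq, eval_smul, eval_smul, ih, Nat.factorial_succ] at h
    have hc : (2 ^ (n + 1) * (((n + 1) * Nat.factorial n : ℕ)) : ℝ) ≠ 0 := by positivity
    apply mul_left_cancel₀ hc
    simp only [smul_eq_mul] at h
    rw [h]; push_cast; ring

lemma J_int (q : ℝ[X]) : IntervalIntegrable (fun s => q.eval s) MeasureTheory.volume (-1) 1 :=
  q.continuous.intervalIntegrable _ _

lemma J_deriv (q : ℝ[X]) : ∫ s in (-1 : ℝ)..1, (derivative q).eval s = q.eval 1 - q.eval (-1) :=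
  intervalIntegral.integral_eq_sub_of_hasDerivAt (fun x _ => q.hasDerivAt x) (J_int _)

lemma J_parts (a b : ℝ[X]) : ∫ s in (-1 : ℝ)..1, (derivative a * b).eval s =
    (a.eval 1 * b.eval 1 - a.eval (-1) * b.eval (-1))
      - ∫ s in (-1 : ℝ)..1, (a * derivative b).eval s := by
  have h := J_deriv (a * b)
  simp only [derivative_mul, eval_add] at h
  rw [intervalIntegral.integral_add (J_int _) (J_int _)] at h
  simp only [eval_mul] at h ⊢
  linarith

lemma J_iter (n j : ℕ) (h : j ≤ n) (q : ℝ[X]) :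
    ∫ s in (-1 : ℝ)..1, (derivative^[j] ((X ^ 2 - 1 : ℝ[X]) ^ n) * q).eval s
      = (-1) ^ j * ∫ s in (-1 : ℝ)..1, ((X ^ 2 - 1 : ℝ[X]) ^ n * derivative^[j] q).eval s := by
  induction j generalizing q with
  | zero => simp
  | succ j ih =>
    rw [Function.iterate_succ_apply', J_parts, eval_iter_u n j (by omega) 1 (by norm_num),
      eval_iter_u n j (by omega) (-1) (by norm_num), ih (by omega),
      Function.iterate_succ_apply derivative j q]
    ring

lemma J_orth (n : ℕ) (q : ℝ[X]) (h : q.natDegree < n) :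
    ∫ s in (-1 : ℝ)..1, (legendre n * q).eval s = 0 := by
  have h1 := J_iter n n le_rfl q
  rw [iterate_derivative_eq_zero h] at h1
  simp only [mul_zero, eval_zero, intervalIntegral.integral_zero] at h1
  rw [legendre_eq]
  simp only [smul_mul_assoc, eval_smul, smul_eq_mul, intervalIntegral.integral_const_mul]
  rw [lgR, h1, mul_zero]

lemma legendre_natDegree (n : ℕ) : (legendre n).natDegree ≤ n := by
  refine (natDegree_smul_le _ _).trans ((natDegree_iterate_derivative _ n).trans ?_)
  have h1 : ((X ^ 2 - 1 : ℝ[X])).natDegree ≤ 2 := by compute_degree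
  have h2 := natDegree_pow_le_of_le n h1
  omega

lemma J_norm (n : ℕ) :
    ((n : ℝ) + 1 / 2) * ∫ s in (-1 : ℝ)..1, (legendre n * legendre n).eval s = 1 := by
  rcases n with _ | n
  · simp [legendre_zero]; norm_num
  · have hd : (derivative (legendre (n + 1))).natDegree ≤ n := by
      have := natDegree_derivative_le (legendre (n + 1))
      have := legendre_natDegree (n + 1)
      omega
    have hd' : (derivative (legendre n)).natDegree ≤ n := by
      have := natDegree_derivative_le (legendre n)
      have := legendre_natDegree n
      omega
    have h1 := J_parts (legendre (n + 2)) (legendre (n + 1))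
    rw [J_orth (n + 2) _ (by omega)] at h1
    have h2 := J_orth (n + 1) _ (Nat.lt_succ_of_le hd')
    rw [mul_comm] at h2
    have h3 : ∫ s in (-1 : ℝ)..1, ((derivative (legendre (n + 2)) - derivative (legendre n))
        * legendre (n + 1)).eval s = 2 := by
      simp only [sub_mul, eval_sub]
      rw [intervalIntegral.integral_sub (J_int _) (J_int _), h1, h2]
      simp only [legendre_eval _ 1 (by norm_num), legendre_eval _ (-1) (by norm_num)]
      have : ((-1 : ℝ)) ^ (n + 2) * (-1) ^ (n + 1) = -1 := by
        rw [← pow_add, show n + 2 + (n + 1) = 2 * (n + 1) + 1 by ring, pow_succ, pow_mul]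
        norm_num
      rw [this]; norm_num
    rw [legendre_deriv] at h3
    simp only [smul_mul_assoc, eval_smul, smul_eq_mul, intervalIntegral.integral_const_mul] at h3
    push_cast
    linarith

lemma J_legendre (k j : ℕ) (h : k ≠ j) :
    ∫ s in (-1 : ℝ)..1, (legendre k * legendre j).eval s = 0 := by
  rcases lt_or_gt_of_ne h with h | h
  · rw [mul_comm]; exact J_orth _ _ ((legendre_natDegree k).trans_lt h)
  · exact J_orth _ _ ((legendre_natDegree j).trans_lt h)

lemma sqrt_aux (k : ℝ) (hk : 0 ≤ k) :
    (Real.sqrt (4 * k + 2))⁻¹ * (2 * k + 1) = Real.sqrt (k + 1 / 2) := by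
  have h : Real.sqrt (4 * k + 2) = 2 * Real.sqrt (k + 1 / 2) := by
    rw [show 4 * k + 2 = 2 ^ 2 * (k + 1 / 2) by ring, Real.sqrt_mul (by norm_num),
      Real.sqrt_sq (by norm_num)]
  have hs : Real.sqrt (k + 1 / 2) ^ 2 = k + 1 / 2 := Real.sq_sqrt (by linarith)
  have hp : 0 < Real.sqrt (k + 1 / 2) := Real.sqrt_pos.2 (by linarith)
  rw [h]
  rw [inv_mul_eq_div, div_eq_iff (by positivity)]
  linarith

lemma recon_psi (p k : ℕ) (hp : 2 ≤ p) (hk : k ≤ p) :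
    derivative (recon p (psi p k)) = Real.sqrt ((k : ℝ) + 1 / 2) • legendre k := by
  have ev : ∀ n, (legendre n).eval (-1) = (-1) ^ n :=
    fun n => legendre_eval n (-1) (by norm_num)
  rcases k with _ | m
  · have h1 : derivative (legendre 1) = 1 := by
      simp only [legendre, Function.iterate_one, pow_one, derivative_smul, derivative_sub,
        derivative_X_pow, derivative_one]
      simp [smul_eq_C_mul, ← C_mul]
    have hs := sqrt_aux 0 le_rfl
    simp at hs
    simp [recon, psi, ev, h1, legendre_zero]
  · have hs := sqrt_aux ((m + 1 : ℕ) : ℝ) (by positivity)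
    have hl := legendre_deriv m
    have key : recon p (psi p (m + 1)) = (Real.sqrt (4 * ((m + 1 : ℕ) : ℝ) + 2))⁻¹ •
        (legendre (m + 2) - legendre m) := by
      by_cases hmp : m + 1 = p
      · subst hmp
        have e : ((-1 : ℝ)) ^ m * (-1) ^ m = 1 := by rw [← mul_pow]; simp
        rw [recon, psi, if_neg (by omega), if_pos rfl, eval_smul, eval_sub, ev, ev,
          Nat.add_sub_cancel, smul_eq_mul]
        have : (Real.sqrt (4 * ((m + 1 : ℕ) : ℝ) + 2))⁻¹ * ((-1) ^ (m + 1) - (-1) ^ m)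
            * (-1) ^ (m + 1) / 2 = (Real.sqrt (4 * ((m + 1 : ℕ) : ℝ) + 2))⁻¹ := by
          rw [pow_succ]
          linear_combination (Real.sqrt (4 * ((m + 1 : ℕ) : ℝ) + 2))⁻¹ * e
        rw [this, ← smul_sub]
        congr 1
        ring
      · rw [recon, psi, if_neg (by omega), if_neg hmp, eval_smul, eval_sub, ev, ev,
          Nat.add_sub_cancel]
        simp [pow_succ]
    rw [key, derivative_smul, derivative_sub, hl, smul_smul, ← hs]
    congr 2
    push_cast
    ring

/-- **Lemma (orthonormal basis via the reconstruction).** For `p ≥ 2`, the polynomials `ψ_k`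
satisfy `(I ψ_k)' = √(k + 1/2) · L_k` for every `k = 0, …, p`, and consequently
`∫_{−1}^{1} (I ψ_k)'(I ψ_j)' ds = δ_{kj}` for all `0 ≤ k, j ≤ p`. -/
theorem psi_recon_deriv (p : ℕ) (hp : 2 ≤ p) :
    (∀ k ≤ p, Polynomial.derivative (recon p (psi p k))
        = Real.sqrt ((k : ℝ) + 1 / 2) • legendre k) ∧
      ∀ k ≤ p, ∀ j ≤ p,
        (∫ s in (-1 : ℝ)..1,
            (Polynomial.derivative (recon p (psi p k))).eval s *
              (Polynomial.derivative (recon p (psi p j))).eval s)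
          = if k = j then 1 else 0 := by
  refine ⟨fun k hk => recon_psi p k hp hk, fun k hk j hj => ?_⟩
  rw [recon_psi p k hp hk, recon_psi p j hp hj]
  have e : ∀ s : ℝ, (Real.sqrt ((k : ℝ) + 1 / 2) • legendre k).eval s *
      (Real.sqrt ((j : ℝ) + 1 / 2) • legendre j).eval s
      = Real.sqrt ((k : ℝ) + 1 / 2) * Real.sqrt ((j : ℝ) + 1 / 2) *
        (legendre k * legendre j).eval s := by
    intro s
    simp only [eval_smul, eval_mul, smul_eq_mul]
    ring
  simp only [e, intervalIntegral.integral_const_mul]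
  split_ifs with h
  · subst h
    rw [Real.mul_self_sqrt (by positivity), J_norm]
  · rw [J_legendre k j h, mul_zero]
end

section
/- For every integer p ≥ 0, the L² norm on (−1,1) of the derivative of L_p − L_{p+1} satisfies ∫_{−1}^{1} ((L_p − L_{p+1})'(s))² ds = 2(p+1)². -/
open Polynomial

theorem lg_val (c : ℝ) (k : ℕ) : ∀ g : Polynomial ℝ,
    (derivative^[k] ((X - C c) ^ k * g)).eval c = (k.factorial : ℝ) * g.eval c ∧
    (derivative^[k+1] ((X - C c) ^ k * g)).eval c
      = ((k+1).factorial : ℝ) * (derivative g).eval c := by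
  induction k with
  | zero => intro g; simp
  | succ k ih =>
    intro g
    have h : derivative ((X - C c) ^ (k+1) * g)
        = (X - C c) ^ k * (C ((k:ℝ)+1) * g + (X - C c) * derivative g) := by
      rw [derivative_mul, derivative_X_sub_C_pow]
      simp only [Nat.add_sub_cancel, map_add, map_natCast, map_one]
      push_cast
      ring
    obtain ⟨h1, h2⟩ := ih (C ((k:ℝ)+1) * g + (X - C c) * derivative g)
    constructor
    · rw [Function.iterate_succ_apply, h, h1, Nat.factorial_succ]
      simp only [eval_add, eval_mul, eval_sub, eval_C, eval_X]
      push_cast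
      ring
    · rw [Function.iterate_succ_apply, h, h2, Nat.factorial_succ (k+1)]
      simp only [derivative_add, derivative_mul, derivative_C, derivative_sub, derivative_X,
        eval_add, eval_mul, eval_sub, eval_C, eval_X, eval_zero, eval_one]
      push_cast
      ring

theorem lg_fact (c : ℝ) (hc : c ^ 2 = 1) (k : ℕ) :
    ((X ^ 2 - 1) ^ k : Polynomial ℝ) = (X - C c) ^ k * (X + C c) ^ k := by
  rw [← mul_pow]
  congr 1
  have : (C c : Polynomial ℝ) ^ 2 = 1 := by rw [← C_pow, hc, C_1]
  linear_combination this

theorem lg_one (c : ℝ) (hc : c ^ 2 = 1) (k : ℕ) : (legendre k).eval c = c ^ k := by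
  have h := (lg_val c k ((X + C c) ^ k)).1
  unfold legendre
  rw [eval_smul, lg_fact c hc]
  change _ • (derivative^[k] _).eval c = _
  rw [h]
  have : (k.factorial : ℝ) ≠ 0 := by exact_mod_cast k.factorial_ne_zero
  simp only [eval_pow, eval_add, eval_X, eval_C, smul_eq_mul]
  rw [← two_mul, mul_pow]
  field_simp

theorem lg_deriv (c : ℝ) (hc : c ^ 2 = 1) (k : ℕ) :
    (derivative (legendre k)).eval c = k * (k + 1) / 2 * c ^ (k + 1) := by
  have h := (lg_val c k ((X + C c) ^ k)).2
  unfold legendre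
  rw [derivative_smul, eval_smul, lg_fact c hc]
  change _ • (derivative (derivative^[k] _)).eval c = _
  rw [← Function.iterate_succ_apply' (f := derivative), h]
  have : (k.factorial : ℝ) ≠ 0 := by exact_mod_cast k.factorial_ne_zero
  rw [derivative_X_add_C_pow, Nat.factorial_succ]
  cases k with
  | zero => simp
  | succ n =>
    simp only [eval_pow, eval_add, eval_X, eval_C, smul_eq_mul, eval_mul, Nat.add_sub_cancel]
    rw [← two_mul, mul_pow]
    have e : c ^ (n + 1 + 1) = c ^ n := by rw [add_assoc, pow_add]; norm_num [hc]
    rw [e]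
    push_cast
    field_simp
    ring

theorem lg_parts (f g : Polynomial ℝ) :
    ∫ s in (-1 : ℝ)..1, f.eval s * (derivative g).eval s
      = f.eval 1 * g.eval 1 - f.eval (-1) * g.eval (-1)
        - ∫ s in (-1 : ℝ)..1, (derivative f).eval s * g.eval s :=
  intervalIntegral.integral_mul_deriv_eq_deriv_mul
    (fun x _ => f.hasDerivAt x) (fun x _ => g.hasDerivAt x)
    ((derivative f).continuous.intervalIntegrable _ _)
    ((derivative g).continuous.intervalIntegrable _ _)

theorem lg_vanish (c : ℝ) (hc : c ^ 2 = 1) (k j : ℕ) (h : j < k) :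
    (derivative^[j] ((X ^ 2 - 1) ^ k : Polynomial ℝ)).eval c = 0 := by
  have h1 : (X - C c) ^ k ∣ ((X ^ 2 - 1) ^ k : Polynomial ℝ) := by
    rw [lg_fact c hc]; exact dvd_mul_right _ _
  have h2 := pow_sub_dvd_iterate_derivative_of_pow_dvd j h1
  exact dvd_iff_isRoot.mp ((dvd_pow_self _ (by omega)).trans h2)

theorem lg_orth_aux (k j : ℕ) (hj : j ≤ k) : ∀ q : Polynomial ℝ, derivative^[j] q = 0 →
    ∫ s in (-1 : ℝ)..1, q.eval s * (derivative^[j] ((X ^ 2 - 1) ^ k : Polynomial ℝ)).eval s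
      = 0 := by
  induction j with
  | zero => intro q hq; simp at hq; simp [hq]
  | succ j ih =>
    intro q hq
    rw [Function.iterate_succ_apply', lg_parts, lg_vanish 1 (by norm_num) k j hj,
      lg_vanish (-1) (by norm_num) k j hj, ih (by omega) _ hq]
    simp

theorem lg_orth (k : ℕ) (q : Polynomial ℝ) (hq : derivative^[k] q = 0) :
    ∫ s in (-1 : ℝ)..1, q.eval s * (legendre k).eval s = 0 := by
  have h := lg_orth_aux k k le_rfl q hq
  unfold legendre
  simp only [eval_smul, smul_eq_mul, mul_left_comm (q.eval _)]
  rw [intervalIntegral.integral_const_mul]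
  exact mul_eq_zero_of_right _ h

theorem lg_deg (k : ℕ) : (legendre k).natDegree ≤ k := by
  unfold legendre
  refine (natDegree_smul_le _ _).trans ?_
  refine (natDegree_iterate_derivative _ k).trans ?_
  have : ((X ^ 2 - 1) ^ k : Polynomial ℝ).natDegree ≤ k * 2 := by
    refine natDegree_pow_le_of_le k ?_
    compute_degree
  omega

theorem lg_inner (m k : ℕ) (h : m ≤ k) :
    ∫ s in (-1 : ℝ)..1, (derivative (legendre m)).eval s * (derivative (legendre k)).eval s
      = m * (m + 1) / 2 * (1 + (-1) ^ (m + k)) := by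
  rw [lg_parts, lg_orth, lg_one 1 (by norm_num), lg_one (-1) (by norm_num),
    lg_deriv 1 (by norm_num), lg_deriv (-1) (by norm_num)]
  · simp only [one_pow]; ring
  · rw [← Function.iterate_succ_apply, ← Function.iterate_succ_apply]
    apply iterate_derivative_eq_zero
    have := lg_deg m
    omega

/-- For every integer `p ≥ 0`, `∫_{−1}^{1} ((L_p − L_{p+1})'(s))² ds = 2(p+1)²`. -/
theorem legendre_diff_deriv_norm (p : ℕ) :
    (∫ s in (-1 : ℝ)..1, ((Polynomial.derivative (legendre p - legendre (p + 1))).eval s) ^ 2)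
      = 2 * ((p : ℝ) + 1) ^ 2 := by
  have h1 := lg_inner p p le_rfl
  have h2 := lg_inner p (p+1) (by omega)
  have h3 := lg_inner (p+1) (p+1) le_rfl
  have e : ∀ s : ℝ, ((derivative (legendre p - legendre (p + 1))).eval s) ^ 2
      = ((derivative (legendre p)).eval s * (derivative (legendre p)).eval s
        - 2 * ((derivative (legendre p)).eval s * (derivative (legendre (p+1))).eval s))
        + (derivative (legendre (p+1))).eval s * (derivative (legendre (p+1))).eval s := by
    intro s
    rw [derivative_sub, eval_sub]
    ring
  have c1 := (derivative (legendre p)).continuous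
  have c2 := (derivative (legendre (p+1))).continuous
  simp only [e]
  rw [intervalIntegral.integral_add, intervalIntegral.integral_sub,
    intervalIntegral.integral_const_mul, h1, h2, h3]
  · have a : (-1 : ℝ) ^ (p + p) = 1 := Even.neg_one_pow ⟨p, rfl⟩
    have b : (-1 : ℝ) ^ (p + 1 + (p + 1)) = 1 := Even.neg_one_pow ⟨p + 1, rfl⟩
    have d : (-1 : ℝ) ^ (p + (p + 1)) = -1 := by rw [← add_assoc, pow_succ, a]; norm_num
    rw [a, b, d]
    push_cast
    ring
  all_goals exact Continuous.intervalIntegrable (by fun_prop) _ _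
end
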